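/- arXiv:2103.11514 — 3 statements merged into one kernel-verified Lean document; each statement's English description precedes it below -/
import Mathlib

section
/- Let k be a finite field with q elements, and let W₁, W₂ be m-dimensional k-vector spaces equipped with a perfect k-bilinear pairing B : W₁ × W₂ → k. Let a, n be integers with 0 ≤ a ≤ n ≤ m, and let C : kⁿ × kⁿ → k be the bilinear form C(x,y) = Σ_{i=1}^{n−a} x_i y_i (of rank n−a). Then the number of pairs (φ₁, φ₂) of injective k-linear maps φ₁ : kⁿ → W₁ and φ₂ : kⁿ → W₂ satisfying B(φ₁ x, φ₂ y) = C(x, y) for all x, y ∈ kⁿ equals q^{2mn − n²} · ∏_{i=0}^{n+a−1} (1 − q^{i−m}), an identity in ℚ. -/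
/-!
Fix an injective `φ₂ : U₂ → W₂`. The maps `φ₁` compatible with `φ₂` are the lifts of `C : U₁ → U₂*`
along the surjection `φ₂* ∘ B : W₁ → U₂*`, whose kernel `K` has dimension `m - dim U₂`, where
`m = dim W₁`. After choosing a linear section of this surjection, a lift is an arbitrary linear map
`U₁ → K`, and the lift is injective exactly when that map is injective on the radical `ker C`. So
everything is reduced to counting injective linear maps, first `U₂ → W₂` and then `ker C → K`; the
two products that arise are consecutive pieces of `∏ (1 - q ^ (i - m))`.
-/

open Function Module

section Lifts

variable {R U W X : Type*} [Ring R] [AddCommGroup U] [Module R U] [AddCommGroup W] [Module R W]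
  [AddCommGroup X] [Module R X]

theorem injective_iff_injective_domRestrict_ker_comp (T : W →ₗ[R] X) (φ : U →ₗ[R] W) :
    Injective φ ↔ Injective (φ.domRestrict (LinearMap.ker (T ∘ₗ φ))) := by
  refine ⟨fun h => h.comp Subtype.val_injective, fun h => ?_⟩
  rw [injective_iff_map_eq_zero]
  intro x hx
  have hx_mem : x ∈ LinearMap.ker (T ∘ₗ φ) := by simp [hx]
  have hx_zero : (⟨x, hx_mem⟩ : LinearMap.ker (T ∘ₗ φ)) = 0 := h (by simpa using hx)
  exact congrArg Subtype.val hx_zero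

/-- The lifts of `C : U → X` along `T : W → X` form a torsor under `Hom(U, ker T)`. The base point
is taken to be `s ∘ C` for a linear section `s` of `T`, because it vanishes on `ker C`. -/
def liftEquivLinearMapKer {T : W →ₗ[R] X} {s : X →ₗ[R] W} (hs : T ∘ₗ s = LinearMap.id)
    (C : U →ₗ[R] X) : {φ : U →ₗ[R] W // T ∘ₗ φ = C} ≃ (U →ₗ[R] LinearMap.ker T) where
  toFun φ := (φ.1 - s ∘ₗ C).codRestrict (LinearMap.ker T) fun x => by
    have hφ : T (φ.1 x) = C x := LinearMap.congr_fun φ.2 x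
    have hsC : T (s (C x)) = C x := LinearMap.congr_fun hs (C x)
    simp [hφ, hsC]
  invFun ψ := ⟨(LinearMap.ker T).subtype ∘ₗ ψ + s ∘ₗ C, by
    rw [LinearMap.comp_add, ← LinearMap.comp_assoc, ← LinearMap.comp_assoc, hs,
      LinearMap.comp_ker_subtype, LinearMap.zero_comp, LinearMap.id_comp, zero_add]⟩
  left_inv φ := by ext; simp
  right_inv ψ := by ext; simp

theorem injective_lift_iff {T : W →ₗ[R] X} {s : X →ₗ[R] W} (hs : T ∘ₗ s = LinearMap.id)
    {C : U →ₗ[R] X} (φ : {φ : U →ₗ[R] W // T ∘ₗ φ = C}) :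
    Injective φ.1 ↔
      Injective ((liftEquivLinearMapKer hs C φ).domRestrict (LinearMap.ker C)) := by
  obtain ⟨φ, rfl⟩ := φ
  have h_coe : (LinearMap.ker T).subtype ∘ (liftEquivLinearMapKer hs (T ∘ₗ φ) ⟨φ, rfl⟩).domRestrict
      (LinearMap.ker (T ∘ₗ φ)) = φ.domRestrict (LinearMap.ker (T ∘ₗ φ)) := by
    ext ⟨x, hx⟩
    have hTx : T (φ x) = 0 := hx
    simp [liftEquivLinearMapKer, hTx]
  rw [injective_iff_injective_domRestrict_ker_comp T φ, ← h_coe,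
    (LinearMap.ker T).subtype_injective.of_comp_iff]

end Lifts

theorem prod_range_pow_sub_pow {F : Type*} [Field F] {q : F} (hq : q ≠ 0) (n m : ℕ) :
    ∏ i ∈ Finset.range n, (q ^ m - q ^ i) =
      q ^ (m * n) * ∏ i ∈ Finset.range n, (1 - q ^ ((i : ℤ) - m)) := by
  calc ∏ i ∈ Finset.range n, (q ^ m - q ^ i)
      = ∏ i ∈ Finset.range n, q ^ m * (1 - q ^ ((i : ℤ) - m)) :=
        Finset.prod_congr rfl fun i _ => by
          rw [mul_sub, mul_one, ← zpow_natCast q m, ← zpow_add₀ hq, add_sub_cancel, zpow_natCast,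
            zpow_natCast]
    _ = q ^ (m * n) * ∏ i ∈ Finset.range n, (1 - q ^ ((i : ℤ) - m)) := by
        rw [Finset.prod_mul_distrib, Finset.prod_const, Finset.card_range, pow_mul]

section FiniteField

variable {k : Type*} [Field k] [Finite k]
variable {U W X : Type*} [AddCommGroup U] [Module k U] [FiniteDimensional k U]
  [AddCommGroup W] [Module k W] [FiniteDimensional k W] [AddCommGroup X] [Module k X]

variable (k W) in
theorem natCard_linearIndependent (n : ℕ) :
    (Nat.card {v : Fin n → W // LinearIndependent k v} : ℚ) =
      ∏ i ∈ Finset.range n, ((Nat.card k : ℚ) ^ finrank k W - (Nat.card k : ℚ) ^ i) := by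
  have := Fintype.ofFinite k
  have : Finite W := Module.finite_of_finite k
  rw [Nat.card_eq_fintype_card (α := k)]
  rcases le_or_gt n (finrank k W) with hn | hn
  · rw [card_linearIndependent hn, Nat.cast_prod, Finset.prod_range]
    refine Finset.prod_congr rfl fun i _ => ?_
    rw [Nat.cast_sub (Nat.pow_le_pow_right Fintype.card_pos (i.2.le.trans hn))]
    push_cast
    rfl
  · have : IsEmpty {v : Fin n → W // LinearIndependent k v} :=
      ⟨fun v => hn.not_ge (by simpa using v.2.fintype_card_le_finrank)⟩
    rw [Nat.card_of_isEmpty, Nat.cast_zero,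
      Finset.prod_eq_zero (Finset.mem_range.2 hn) (sub_self _)]

variable (k U W) in
theorem natCard_injective_linearMap :
    (Nat.card {φ : U →ₗ[k] W // Injective φ} : ℚ) =
      (Nat.card k : ℚ) ^ (finrank k W * finrank k U) *
        ∏ i ∈ Finset.range (finrank k U), (1 - (Nat.card k : ℚ) ^ ((i : ℤ) - finrank k W)) := by
  let b := finBasis k U
  have h_inj (v : Fin (finrank k U) → W) : LinearIndependent k v ↔ Injective (b.constr k v) := by
    refine ⟨b.injective_constr_of_linearIndependent, fun h => ?_⟩
    simpa [Function.comp_def] using b.linearIndependent.map' _ (LinearMap.ker_eq_bot.2 h)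
  rw [← Nat.card_congr ((b.constr k).toEquiv.subtypeEquiv h_inj), natCard_linearIndependent,
    prod_range_pow_sub_pow (Nat.cast_ne_zero.2 Nat.card_pos.ne')]

variable (W) in
theorem natCard_injective_domRestrict (P : Submodule k U) :
    (Nat.card {φ : U →ₗ[k] W // Injective (φ.domRestrict P)} : ℚ) =
      (Nat.card k : ℚ) ^ (finrank k W * finrank k U) *
        ∏ i ∈ Finset.range (finrank k P), (1 - (Nat.card k : ℚ) ^ ((i : ℤ) - finrank k W)) := by
  obtain ⟨Q, hPQ⟩ := P.exists_isCompl
  let e : {φ : U →ₗ[k] W // Injective (φ.domRestrict P)} ≃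
      {φ : P →ₗ[k] W // Injective φ} × (Q →ₗ[k] W) :=
    ((LinearMap.ofIsComplProdEquiv hPQ).symm.toEquiv.subtypeEquiv fun _ => Iff.rfl).trans
      (Equiv.prodSubtypeFstEquivSubtypeProd (p := fun φ : P →ₗ[k] W => Injective φ))
  rw [Nat.card_congr e, Nat.card_prod, Nat.cast_mul, natCard_injective_linearMap,
    Module.natCard_eq_pow_finrank (K := k) (V := Q →ₗ[k] W), Module.finrank_linearMap,
    ← Submodule.finrank_add_eq_of_isCompl hPQ]
  push_cast
  ring

theorem natCard_injective_lift {T : W →ₗ[k] X} (hT : Surjective T) (C : U →ₗ[k] X) :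
    (Nat.card {φ : U →ₗ[k] W // T ∘ₗ φ = C ∧ Injective φ} : ℚ) =
      (Nat.card k : ℚ) ^ (finrank k (LinearMap.ker T) * finrank k U) *
        ∏ i ∈ Finset.range (finrank k (LinearMap.ker C)),
          (1 - (Nat.card k : ℚ) ^ ((i : ℤ) - finrank k (LinearMap.ker T))) := by
  obtain ⟨s, hs⟩ := T.exists_rightInverse_of_surjective (LinearMap.range_eq_top.2 hT)
  let e : {φ : U →ₗ[k] W // T ∘ₗ φ = C ∧ Injective φ} ≃
      {ψ : U →ₗ[k] LinearMap.ker T // Injective (ψ.domRestrict (LinearMap.ker C))} :=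
    (Equiv.subtypeSubtypeEquivSubtypeInter (fun φ : U →ₗ[k] W => T ∘ₗ φ = C)
      (fun φ => Injective φ)).symm.trans
      ((liftEquivLinearMapKer hs C).subtypeEquiv (injective_lift_iff hs))
  rw [Nat.card_congr e, natCard_injective_domRestrict]

end FiniteField

section SplitIsometricEmbedding

variable {R : Type*} [CommRing R]
variable {U₁ U₂ W₁ W₂ : Type*} [AddCommGroup U₁] [Module R U₁] [AddCommGroup U₂] [Module R U₂]
  [AddCommGroup W₁] [Module R W₁] [AddCommGroup W₂] [Module R W₂]

/-- Isometric embeddings of the split Hermitian space `(U₁, U₂, C)` into `(W₁, W₂, B)`: pairs of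
injective linear maps carrying `B` back to `C`. -/
def SplitIsometricEmbedding (C : U₁ →ₗ[R] U₂ →ₗ[R] R) (B : W₁ →ₗ[R] W₂ →ₗ[R] R) : Type _ :=
  {φ : (U₁ →ₗ[R] W₁) × (U₂ →ₗ[R] W₂) //
    Injective φ.1 ∧ Injective φ.2 ∧ ∀ x y, B (φ.1 x) (φ.2 y) = C x y}

/-- For a fixed `φ₂`, compatibility with the pairings says that `φ₁` is a lift of `C : U₁ → U₂*`
along `φ₂* ∘ B : W₁ → U₂*`. -/
def splitIsometricEmbeddingEquivSigma (C : U₁ →ₗ[R] U₂ →ₗ[R] R) (B : W₁ →ₗ[R] W₂ →ₗ[R] R) :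
    SplitIsometricEmbedding C B ≃ Σ φ₂ : {φ₂ : U₂ →ₗ[R] W₂ // Injective φ₂},
      {φ₁ : U₁ →ₗ[R] W₁ // (φ₂.1.dualMap ∘ₗ B) ∘ₗ φ₁ = C ∧ Injective φ₁} where
  toFun φ := ⟨⟨φ.1.2, φ.2.2.1⟩, φ.1.1, LinearMap.ext₂ φ.2.2.2, φ.2.1⟩
  invFun φ := ⟨(φ.2.1, φ.1.1), φ.2.2.2, φ.1.2, LinearMap.congr_fun₂ φ.2.2.1⟩
  left_inv _ := rfl
  right_inv _ := rfl

end SplitIsometricEmbedding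

section StdSplitPairing

variable {R : Type*} [CommRing R]

variable (R) in
/-- The pairing `∑_{i < r} xᵢ yᵢ` on `Rⁿ`, with indices starting from `0`. Over a field `k`, the
pairing of the split Hermitian space `U_{n-a,a}` is `stdSplitPairing k n (n - a)`. -/
def stdSplitPairing (n r : ℕ) : (Fin n → R) →ₗ[R] (Fin n → R) →ₗ[R] R :=
  ∑ i : Fin n, if (i : ℕ) < r then
    (LinearMap.mul R R).compl₁₂ (LinearMap.proj i) (LinearMap.proj i) else 0

theorem stdSplitPairing_apply (n r : ℕ) (x y : Fin n → R) :
    stdSplitPairing R n r x y = ∑ i : Fin n, if (i : ℕ) < r then x i * y i else 0 := by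
  simp only [stdSplitPairing, LinearMap.sum_apply]
  exact Finset.sum_congr rfl fun i _ => by split_ifs <;> simp

theorem mem_ker_stdSplitPairing {n r : ℕ} {x : Fin n → R} :
    x ∈ LinearMap.ker (stdSplitPairing R n r) ↔ ∀ i : Fin n, (i : ℕ) < r → x i = 0 := by
  rw [LinearMap.mem_ker]
  refine ⟨fun hx i hi => ?_, fun hx => LinearMap.ext fun y => ?_⟩
  · have h_single := LinearMap.congr_fun hx (Pi.single i 1)
    rw [stdSplitPairing_apply, Finset.sum_eq_single i (by simp +contextual) (by simp)] at h_single
    simpa [hi] using h_single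
  · rw [stdSplitPairing_apply]
    exact Finset.sum_eq_zero fun i _ => by split_ifs with hi <;> simp [hx, hi]

variable (R) in
theorem finrank_ker_stdSplitPairing [Nontrivial R] (n r : ℕ) :
    finrank R (LinearMap.ker (stdSplitPairing R n r)) = n - r := by
  let J : Set (Fin n) := {i | i < r}
  have h_ker : LinearMap.ker (stdSplitPairing R n r) =
      ⨅ i ∈ J, LinearMap.ker (LinearMap.proj i : (Fin n → R) →ₗ[R] R) := by
    ext x
    rw [mem_ker_stdSplitPairing]
    simp [J]
  have h_card : Fintype.card ↥Jᶜ = n - r := by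
    have h_card_J : Fintype.card J = min n r := by
      rw [Fintype.card_subtype]
      exact Fin.card_filter_val_lt
    rw [Fintype.card_compl_set, Fintype.card_fin, h_card_J]
    omega
  rw [h_ker, (LinearMap.iInfKerProjEquiv R (fun _ : Fin n => R) disjoint_compl_left
    (Set.compl_union_self J).ge).finrank_eq, finrank_fintype_fun_eq_card, h_card]

end StdSplitPairing

section SplitHermitian

variable {k : Type*} [Field k]
variable {U₁ U₂ W₁ W₂ : Type*} [AddCommGroup U₁] [Module k U₁] [AddCommGroup U₂] [Module k U₂]
  [AddCommGroup W₁] [Module k W₁] [AddCommGroup W₂] [Module k W₂]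

theorem dualMap_comp_surjective {B : W₁ →ₗ[k] W₂ →ₗ[k] k} (hB : Surjective B) {φ : U₂ →ₗ[k] W₂}
    (hφ : Injective φ) : Surjective (φ.dualMap ∘ₗ B) :=
  (LinearMap.dualMap_surjective_of_injective hφ).comp hB

theorem finrank_ker_dualMap_comp_add_finrank [FiniteDimensional k W₁]
    {B : W₁ →ₗ[k] W₂ →ₗ[k] k} (hB : Surjective B) {φ : U₂ →ₗ[k] W₂} (hφ : Injective φ) :
    finrank k (LinearMap.ker (φ.dualMap ∘ₗ B)) + finrank k U₂ = finrank k W₁ := by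
  rw [← Subspace.dual_finrank_eq (K := k) (V := U₂), add_comm,
    ← LinearMap.finrank_range_add_finrank_ker (φ.dualMap ∘ₗ B),
    LinearMap.range_eq_top.2 (dualMap_comp_surjective hB hφ), finrank_top]

theorem natCard_injective_lift_dualMap_comp [Finite k] [FiniteDimensional k U₁]
    [FiniteDimensional k W₁] (C : U₁ →ₗ[k] U₂ →ₗ[k] k) {B : W₁ →ₗ[k] W₂ →ₗ[k] k}
    (hB : Surjective B) {φ₂ : U₂ →ₗ[k] W₂} (hφ₂ : Injective φ₂) :
    (Nat.card {φ₁ : U₁ →ₗ[k] W₁ // (φ₂.dualMap ∘ₗ B) ∘ₗ φ₁ = C ∧ Injective φ₁} : ℚ) =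
      (Nat.card k : ℚ) ^ (((finrank k W₁ : ℤ) - finrank k U₂) * finrank k U₁) *
        ∏ i ∈ Finset.range (finrank k (LinearMap.ker C)),
          (1 - (Nat.card k : ℚ) ^ (((finrank k U₂ + i : ℕ) : ℤ) - finrank k W₁)) := by
  have h_ker : (finrank k (LinearMap.ker (φ₂.dualMap ∘ₗ B)) : ℤ) =
      finrank k W₁ - finrank k U₂ := by
    rw [← finrank_ker_dualMap_comp_add_finrank hB hφ₂]
    simp
  rw [natCard_injective_lift (dualMap_comp_surjective hB hφ₂), ← zpow_natCast, Nat.cast_mul, h_ker]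
  simp only [Nat.cast_add, sub_sub_eq_add_sub, add_comm]

theorem count_isometric_embeddings_split_general [Finite k] [FiniteDimensional k U₁]
    [FiniteDimensional k U₂] [FiniteDimensional k W₁]
    (C : U₁ →ₗ[k] U₂ →ₗ[k] k) (B : W₁ →ₗ[k] W₂ →ₗ[k] k) [B.IsPerfPair] :
    (Nat.card (SplitIsometricEmbedding C B) : ℚ) =
      (Nat.card k : ℚ) ^ ((finrank k W₁ : ℤ) * (finrank k U₁ + finrank k U₂) -
          finrank k U₁ * finrank k U₂) *
        ∏ i ∈ Finset.range (finrank k U₂ + finrank k (LinearMap.ker C)),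
          (1 - (Nat.card k : ℚ) ^ ((i : ℤ) - finrank k W₁)) := by
  have hB : Surjective B := (LinearMap.IsPerfPair.bijective_left B).surjective
  have : FiniteDimensional k W₂ :=
    .of_injective B.flip (LinearMap.IsPerfPair.bijective_right B).injective
  have : Finite (U₂ →ₗ[k] W₂) := Module.finite_of_finite k
  have := Fintype.ofFinite {φ₂ : U₂ →ₗ[k] W₂ // Injective φ₂}
  have : Finite (U₁ →ₗ[k] W₁) := Module.finite_of_finite k
  rw [Nat.card_congr (splitIsometricEmbeddingEquivSigma C B), Nat.card_sigma, Nat.cast_sum,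
    Finset.sum_congr rfl fun φ₂ _ => natCard_injective_lift_dualMap_comp C hB φ₂.2,
    Finset.sum_const, Finset.card_univ, nsmul_eq_mul, ← Nat.card_eq_fintype_card,
    natCard_injective_linearMap, ← finrank_of_isPerfPair B, Finset.prod_range_add, ← zpow_natCast,
    mul_mul_mul_comm, ← zpow_add₀ (Nat.cast_ne_zero.2 Nat.card_pos.ne')]
  congr 2
  push_cast
  ring

end SplitHermitian

/-- **Counting isometric embeddings of split Hermitian spaces over a finite field.**
Let `k` be a finite field with `q` elements and `(W₁, W₂, B)` a nondegenerate (perfect) split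
Hermitian space of rank `m`, i.e. `B : W₁ × W₂ → k` is a perfect `k`-bilinear pairing of
`m`-dimensional spaces.  Let `0 ≤ a ≤ n ≤ m` and let `C` be the bilinear form
`C(x,y) = Σ_{i=1}^{n−a} xᵢ yᵢ` of rank `n − a` on `kⁿ`.  Then the number of pairs of injective
linear maps `(φ₁ : kⁿ → W₁, φ₂ : kⁿ → W₂)` with `B(φ₁ x, φ₂ y) = C(x, y)` for all `x, y`
equals `q^(2mn − n²) · ∏_{i=0}^{n+a−1} (1 − q^{i−m})`. -/
theorem count_isometric_embeddings_split
    (k : Type*) [Field k] [Fintype k] (q : ℕ) (hq : Fintype.card k = q)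
    (m n a : ℕ) (ha : a ≤ n) (hnm : n ≤ m)
    (W₁ W₂ : Type*) [AddCommGroup W₁] [Module k W₁] [AddCommGroup W₂] [Module k W₂]
    [FiniteDimensional k W₁] [FiniteDimensional k W₂]
    (hW₁ : Module.finrank k W₁ = m) (hW₂ : Module.finrank k W₂ = m)
    (B : W₁ →ₗ[k] W₂ →ₗ[k] k)
    (hB₁ : ∀ x : W₁, (∀ y : W₂, B x y = 0) → x = 0)
    (hB₂ : ∀ y : W₂, (∀ x : W₁, B x y = 0) → y = 0) :
    (Nat.card
        {φ : ((Fin n → k) →ₗ[k] W₁) × ((Fin n → k) →ₗ[k] W₂) //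
          Function.Injective φ.1 ∧ Function.Injective φ.2 ∧
          ∀ x y : Fin n → k,
            B (φ.1 x) (φ.2 y) = ∑ i : Fin n, if (i : ℕ) < n - a then x i * y i else 0} : ℚ)
      = (q : ℚ) ^ (2 * m * n - n ^ 2) *
          ∏ i ∈ Finset.range (n + a), (1 - (q : ℚ) ^ ((i : ℤ) - (m : ℤ))) := by
  subst hq
  have : B.IsPerfPair := .of_injective
    (LinearMap.ker_eq_bot.1 (LinearMap.separatingLeft_iff_ker_eq_bot.1 hB₁))
    (LinearMap.ker_eq_bot.1 (LinearMap.separatingRight_iff_flip_ker_eq_bot.1 hB₂))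
  have h := count_isometric_embeddings_split_general (stdSplitPairing k n (n - a)) B
  have h_exp : ((2 * m * n - n ^ 2 : ℕ) : ℤ) = (m : ℤ) * (n + n) - n * n := by
    rw [Nat.cast_sub (by nlinarith)]
    push_cast
    ring
  simpa only [SplitIsometricEmbedding, stdSplitPairing_apply, finrank_ker_stdSplitPairing,
    finrank_fin_fun, hW₁, Nat.sub_sub_self ha, Nat.card_eq_fintype_card (α := k), ← h_exp,
    zpow_natCast] using h
end

section
/- Let p be a prime, q a power of p, and κ a field of characteristic p. Let V be a κ-vector space, let V₁ and V₂ be finite-dimensional κ-subspaces of V, and let τ : V₁ → V be an injective additive map whose image is contained in V₂ and which is semilinear over the q-power Frobenius of κ, i.e. τ(c·x) = c^q · τ(x) for all c ∈ κ and x ∈ V₁. Then the set {x ∈ V₁ : τ(x) = x} is finite. -/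
/-!
Let `τ` be `σ`-semilinear and `f` linear and injective. Solutions of `τ x = f x` that are linearly
independent remain so after applying `f`, so comparing coefficients in `τ x = f x` shows that a
solution in their span has coefficients fixed by `σ`. A maximal independent set of solutions is
finite and its span contains every solution; hence there are finitely many solutions as soon as `σ`
has finitely many fixed points. The fixed points of the `q`-power Frobenius are the roots of the
nonzero polynomial `X ^ q - X`.
-/

open Polynomial in
lemma finite_setOf_pow_eq_self {R : Type*} [CommRing R] [IsDomain R] {n : ℕ} (hn : 1 < n) :
    {c : R | c ^ n = c}.Finite := by
  have hne : (X ^ n - X : R[X]) ≠ 0 := (monic_X_pow_sub (by simpa using hn)).ne_zero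
  simpa only [IsRoot.def, eval_sub, eval_pow, eval_X, sub_eq_zero] using finite_setOfPred_isRoot hne

lemma coeff_fixed_of_map_sum_smul_eq {R W V ι : Type*} [Semiring R] [AddCommMonoid W] [Module R W]
    [AddCommMonoid V] [Module R V] [Fintype ι] {σ : R →+* R} {τ : W →ₛₗ[σ] V} {f : W →ₗ[R] V}
    {b : ι → W} (hb : LinearIndependent R (f ∘ b)) (hτb : ∀ i, τ (b i) = f (b i)) {c : ι → R}
    (hc : τ (∑ i, c i • b i) = f (∑ i, c i • b i)) (i : ι) : σ (c i) = c i := by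
  have hsum : ∑ i, σ (c i) • (f ∘ b) i = ∑ i, c i • (f ∘ b) i := by
    simpa only [map_sum, map_smulₛₗ, RingHom.id_apply, Function.comp_apply, hτb] using hc
  exact Fintype.linearIndependent_iffₛ.1 hb (σ ∘ c) c hsum i

theorem finite_fixed_points_of_frobenius_semilinear_general {K W V : Type*} [DivisionRing K]
    [AddCommGroup W] [Module K W] [FiniteDimensional K W] [AddCommGroup V] [Module K V]
    {σ : K →+* K} (hσ : {c | σ c = c}.Finite) (τ : W →ₛₗ[σ] V) {f : W →ₗ[K] V}
    (hf : Function.Injective f) : {x | τ x = f x}.Finite := by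
  obtain ⟨b, hb_fixed, hb_span, hb_indep⟩ := exists_linearIndependent K {x | τ x = f x}
  have : Fintype b := @Fintype.ofFinite b hb_indep.finite
  have hfb_indep : LinearIndependent K (f ∘ ((↑) : b → W)) :=
    hb_indep.map' f (LinearMap.ker_eq_bot.2 hf)
  refine ((Set.Finite.pi' fun _ : b ↦ hσ).image fun c ↦ ∑ i : b, c i • (i : W)).subset
    fun x hx ↦ ?_
  have hx_span : x ∈ Submodule.span K (Set.range ((↑) : b → W)) := by
    rw [Subtype.range_coe, hb_span]
    exact Submodule.subset_span hx
  obtain ⟨c, rfl⟩ := (Submodule.mem_span_range_iff_exists_fun K).1 hx_span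
  exact ⟨c, coeff_fixed_of_map_sum_smul_eq hfb_indep (fun i ↦ hb_fixed i.2) hx, rfl⟩

/-- **Finiteness of fixed points of a Frobenius-semilinear map.**
Let `κ` be a field of characteristic `p` and `q` a (positive) power of `p`.  Let `V` be a
`κ`-vector space, `V₁, V₂ ⊆ V` finite-dimensional subspaces, and `τ : V₁ → V` an injective
additive map with image contained in `V₂` that is semilinear over the `q`-power Frobenius,
i.e. `τ(c • x) = c^q • τ(x)`.  Then the set `{x ∈ V₁ : τ(x) = x}` is finite. -/
theorem finite_fixed_points_of_frobenius_semilinear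
    (p : ℕ) (hp : p.Prime) (q e : ℕ) (he : 1 ≤ e) (hq : q = p ^ e)
    (κ : Type*) [Field κ] [CharP κ p]
    (V : Type*) [AddCommGroup V] [Module κ V]
    (V₁ V₂ : Submodule κ V) [FiniteDimensional κ V₁] [FiniteDimensional κ V₂]
    (τ : V₁ → V)
    (hinj : Function.Injective τ)
    (hadd : ∀ x y : V₁, τ (x + y) = τ x + τ y)
    (himage : ∀ x : V₁, τ x ∈ V₂)
    (hsemi : ∀ (c : κ) (x : V₁), τ (c • x) = c ^ q • τ x) :
    {x : V₁ | τ x = (x : V)}.Finite := by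
  subst hq
  have := ExpChar.prime (R := κ) hp
  let T : V₁ →ₛₗ[iterateFrobenius κ p e] V := ⟨⟨τ, hadd⟩, hsemi⟩
  exact finite_fixed_points_of_frobenius_semilinear_general
    (finite_setOf_pow_eq_self (Nat.one_lt_pow (by lia) hp.one_lt)) T V₁.injective_subtype
end

section
/- Let q be an odd prime power, k' = 𝔽_{q²} with involution σ(c) = c^q, and let V be a finite-dimensional k'-vector space equipped with a nondegenerate Hermitian form h : V × V → k' (σ-semilinear in the first variable, k'-linear in the second, with h(y, x) = σ(h(x, y)) for all x, y). Let U(V, h) = {g ∈ GL(V) : h(gx, gy) = h(x, y) for all x, y ∈ V}. Then: (i) two nilpotent h-self-adjoint endomorphisms e, e' of V (i.e. h(ex, y) = h(x, ey) for all x, y) are conjugate under U(V, h) if and only if they are conjugate under GL(V), i.e. if and only if they have the same Jordan type; and (ii) every nilpotent k'-linear endomorphism of V is GL(V)-conjugate to some h-self-adjoint nilpotent endomorphism. Consequently, the U(V, h)-orbits of h-self-adjoint nilpotent endomorphisms of V are in bijection with the partitions of dim_{k'} V, via Jordan type. -/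
/-!
Two nondegenerate Hermitian forms `h`, `h'` on `V` are related by an invertible `A` with
`h (A x) y = h' x y`. This `A` is self-adjoint for `h`, and it commutes with every `e` that is
self-adjoint for both forms. If `A = star b * b` for some `b` in the commutative algebra `K[A]`,
then `h (b x) (b y) = h' x y`, while `b` still commutes with `e`. Applied to `h` and its pullback
along an arbitrary conjugation `φ` from `e₁` to `e₂`, this corrects `φ` to a unitary one. Applied to
`h` and any Hermitian form for which `e` is self-adjoint, it conjugates `e` to an endomorphism that
is self-adjoint for `h`.

Such a `b` exists because `K[A]` is a finite commutative ring. With `ε = star c - c` a skew unit,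
norms of elements `x + ε y` are values of `x ^ 2 - ε ^ 2 * y ^ 2`, which represents everything over
each residue field of the ring of self-adjoint elements. This gives `A` up to a nilpotent error,
which Newton's method removes.

For a nilpotent `e`, a form is built on each Jordan block `K[X] ⧸ (X ^ n)`: it sends `(f, g)` to the
coefficient of `X ^ (n - 1)` in `star f * g`, and multiplication by `X` is self-adjoint for it.
-/

section HermitianNorms

open Polynomial

theorem exists_sq_add_mul_sq_eq {F : Type*} [Field F] [Finite F] {a : F} (ha : a ≠ 0) (u : F) :
    ∃ x y : F, x ^ 2 + a * y ^ 2 = u := by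
  by_cases hF : ringChar F = 2
  · obtain ⟨x, rfl⟩ := FiniteField.isSquare_of_char_two hF u
    exact ⟨x, 0, by ring⟩
  · have := Fintype.ofFinite F
    obtain ⟨x, y, hxy⟩ := FiniteField.exists_root_sum_quadratic
      (f := X ^ 2 - C u) (g := C a * X ^ 2)
      (degree_X_pow_sub_C two_pos u) (degree_C_mul_X_pow 2 ha)
      (FiniteField.odd_card_of_char_ne_two hF)
    simp only [eval_sub, eval_mul, eval_pow, eval_X, eval_C] at hxy
    exact ⟨x, y, by linear_combination hxy⟩

theorem exists_forall_quotientMk_maximalSpectrum_eq {R : Type*} [CommRing R] [IsArtinianRing R]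
    (r : ∀ I : MaximalSpectrum R, R ⧸ I.asIdeal) :
    ∃ x : R, ∀ I : MaximalSpectrum R, Ideal.Quotient.mk I.asIdeal x = r I := by
  obtain ⟨x, hx⟩ := (IsArtinianRing.quotNilradicalEquivPi R).surjective r
  obtain ⟨x, rfl⟩ := Ideal.Quotient.mk_surjective x
  exact ⟨x, congrFun hx⟩

theorem exists_isNilpotent_sq_add_mul_sq_sub {R : Type*} [CommRing R] [Finite R] {a : R}
    (ha : IsUnit a) (u : R) : ∃ x y : R, IsNilpotent (x ^ 2 + a * y ^ 2 - u) := by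
  have solvable_residue (I : MaximalSpectrum R) : ∃ x y : R ⧸ I.asIdeal,
      x ^ 2 + Ideal.Quotient.mk I.asIdeal a * y ^ 2 = Ideal.Quotient.mk I.asIdeal u := by
    let : Field (R ⧸ I.asIdeal) := Ideal.Quotient.field I.asIdeal
    have : Finite (R ⧸ I.asIdeal) := Finite.of_surjective _ Ideal.Quotient.mk_surjective
    exact exists_sq_add_mul_sq_eq (ha.map (Ideal.Quotient.mk I.asIdeal)).ne_zero _
  choose x' y' hxy' using solvable_residue
  obtain ⟨x, hx⟩ := exists_forall_quotientMk_maximalSpectrum_eq x'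
  obtain ⟨y, hy⟩ := exists_forall_quotientMk_maximalSpectrum_eq y'
  refine ⟨x, y, nilpotent_iff_mem_prime.mpr fun I hI => ?_⟩
  let J : MaximalSpectrum R := ⟨I, IsArtinianRing.isMaximal_of_isPrime I⟩
  rw [← Ideal.Quotient.eq_zero_iff_mem]
  simp only [map_sub, map_add, map_mul, map_pow]
  rw [hx J, hy J, hxy' J, sub_self]

theorem exists_mul_one_add_add_mul_sq_eq {R : Type*} [CommRing R] {u w : R} (hu : IsUnit u)
    (hw : IsNilpotent (w - u)) (t : R) : ∃ z : R, w * (1 + z + t * z ^ 2) = u := by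
  have hw_unit : IsUnit w := by
    simpa using hw.isUnit_add_left_of_commute hu (Commute.all _ _)
  let P : R[X] := C w * (1 + X + C t * X ^ 2) - C u
  -- Newton iteration starts at `z = 0`, where the derivative of `P` is the unit `w`.
  obtain ⟨z, ⟨-, hz⟩, -⟩ := existsUnique_nilpotent_sub_and_aeval_eq_zero (P := P) (x := (0 : R))
    (by simpa [P] using hw) (by simpa [P] using hw_unit)
  exact ⟨z, by simpa [P, sub_eq_zero] using hz⟩

theorem isUnit_selfAdjoint_of_isUnit_coe {R : Type*} [CommRing R] [StarRing R] {x : selfAdjoint R}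
    (hx : IsUnit (x : R)) : IsUnit x := by
  obtain ⟨v, hv⟩ := hx
  have star_v : star v = v := Units.ext (by rw [Units.coe_star, hv, x.2.star_eq])
  have star_inv : IsSelfAdjoint ((v⁻¹ : Rˣ) : R) := by
    rw [IsSelfAdjoint, ← Units.coe_star, star_inv, star_v]
  exact IsUnit.of_mul_eq_one ⟨_, star_inv⟩ (Subtype.ext (by simp [← hv]))

theorem exists_star_mul_self_eq_of_isUnit {R : Type*} [CommRing R] [StarRing R] [Finite R]
    {c u : R} (hc : IsUnit (star c - c)) (hu : IsUnit u) (hu' : IsSelfAdjoint u) :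
    ∃ b : R, star b * b = u := by
  obtain ⟨ε, hε⟩ := hc
  have star_ε : star (ε : R) = -ε := by simp [hε]
  have star_ε_inv : star (↑ε⁻¹ : R) = -↑ε⁻¹ := by
    have : star ε = -ε := Units.ext (by simpa using star_ε)
    rw [← Units.coe_star_inv, this, inv_neg, Units.val_neg]
  let τ : R := ↑ε⁻¹ * star c
  have trace_τ : star τ + τ = 1 := by
    simp only [τ, star_mul', star_star, star_ε_inv]
    linear_combination (↑ε⁻¹ : R) * hε.symm + ε.inv_mul
  let a : selfAdjoint R := ⟨-ε ^ 2, by simp [selfAdjoint.mem_iff, star_ε]⟩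
  have ha : IsUnit a := isUnit_selfAdjoint_of_isUnit_coe (ε.isUnit.pow 2).neg
  let u₀ : selfAdjoint R := ⟨u, hu'⟩
  have hu₀ : IsUnit u₀ := isUnit_selfAdjoint_of_isUnit_coe hu
  obtain ⟨x, y, hxy⟩ := exists_isNilpotent_sq_add_mul_sq_sub ha u₀
  obtain ⟨z, hz⟩ := exists_mul_one_add_add_mul_sq_eq hu₀ hxy
    ⟨star τ * τ, .star_mul_self τ⟩
  have hz' : ((x : R) ^ 2 - ε ^ 2 * y ^ 2) * (1 + z + star τ * τ * z ^ 2) = u := by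
    simpa [a, u₀, ← sub_eq_add_neg] using congrArg Subtype.val hz
  -- As `star τ + τ = 1`, the norm of `1 + τ * z` is `1 + z + star τ * τ * z ^ 2`.
  refine ⟨(x + ε * y) * (1 + τ * z), ?_⟩
  simp only [star_mul', star_add, star_one, star_ε, x.2.star_eq, y.2.star_eq, z.2.star_eq]
  linear_combination hz' + (x - ε * y : R) * (x + ε * y) * z * trace_τ

theorem exists_mem_adjoin_star_mul_self_eq {K E : Type*} [Field K] [StarRing K] [Ring E]
    [StarRing E] [Algebra K E] [StarModule K E] [Finite E] {c : K} (hc : star c ≠ c) {a : E}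
    (ha : IsUnit a) (ha' : IsSelfAdjoint a) : ∃ b ∈ StarAlgebra.adjoin K {a}, star b * b = a := by
  have := ha'.isStarNormal
  have := StarAlgebra.isMulCommutative_adjoin_singleton K a
  let a₀ : StarAlgebra.adjoin K {a} := ⟨a, StarAlgebra.self_mem_adjoin_singleton K a⟩
  have ha₀ : IsUnit a₀ := by
    obtain ⟨n, hn, han⟩ := (isOfFinOrder_of_finite ha.unit).exists_pow_eq_one
    exact IsUnit.of_pow_eq_one (Subtype.ext (by simpa using congrArg Units.val han)) hn.ne'
  have hc' : IsUnit (star (algebraMap K (StarAlgebra.adjoin K {a}) c) - algebraMap K _ c) := by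
    rw [← algebraMap_star_comm, ← map_sub]
    exact (sub_ne_zero.mpr hc).isUnit.map _
  obtain ⟨b, hb⟩ := exists_star_mul_self_eq_of_isUnit hc' ha₀ (Subtype.ext ha')
  exact ⟨b, b.2, congrArg Subtype.val hb⟩

end HermitianNorms

section HermitianForms

open LinearMap

/-- A nondegenerate Hermitian form over a field with involution `star`, which may have any
characteristic. It is conjugate-linear in the first variable. -/
structure IsNondegenerateHermitian {K V : Type*} [Field K] [StarRing K] [AddCommGroup V]
    [Module K V] (h : V →ₗ⋆[K] V →ₗ[K] K) : Prop where
  isSymm : h.IsSymm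
  separatingLeft : h.SeparatingLeft

namespace IsNondegenerateHermitian

variable {K V W : Type*} [Field K] [StarRing K] [AddCommGroup V] [Module K V] [AddCommGroup W]
  [Module K W] {h h' : V →ₗ⋆[K] V →ₗ[K] K}

theorem star_apply (hh : IsNondegenerateHermitian h) (x y : V) : star (h x y) = h y x :=
  hh.isSymm.eq x y

theorem injective (hh : IsNondegenerateHermitian h) : Function.Injective h :=
  LinearMap.ker_eq_bot.mp (separatingLeft_iff_ker_eq_bot.mp hh.separatingLeft)

theorem ext_left (hh : IsNondegenerateHermitian h) {x y : V} (hxy : ∀ z, h x z = h y z) : x = y :=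
  hh.injective (LinearMap.ext hxy)

theorem comp_equiv {h : W →ₗ⋆[K] W →ₗ[K] K} (hh : IsNondegenerateHermitian h) (φ : V ≃ₗ[K] W) :
    IsNondegenerateHermitian ((h.comp φ.toLinearMap).compl₂ φ.toLinearMap) where
  isSymm := ⟨fun x y => hh.star_apply (φ x) (φ y)⟩
  separatingLeft x hx := φ.map_eq_zero_iff.mp <| hh.separatingLeft _ fun y => by
    simpa using hx (φ.symm y)

variable [FiniteDimensional K V]

theorem surjective (hh : IsNondegenerateHermitian h) : Function.Surjective h := by
  have coannihilator_range : (range h).dualCoannihilator = ⊥ := by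
    refine (Submodule.eq_bot_iff _).mpr fun y hy => hh.separatingLeft y fun x => ?_
    rw [← hh.star_apply, (Submodule.mem_dualCoannihilator y).mp hy _ (mem_range_self h x),
      star_zero]
  rw [← range_eq_top, ← Subspace.dualCoannihilator_dualAnnihilator_eq (W := range h),
    coannihilator_range, Submodule.dualAnnihilator_bot]

/-- The endomorphism `A` with `h (A x) y = B x y`, relating an arbitrary sesquilinear form `B` to
the nondegenerate form `h`. -/
noncomputable def representing (hh : IsNondegenerateHermitian h) (B : V →ₗ⋆[K] V →ₗ[K] K) :
    Module.End K V :=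
  (LinearEquiv.ofBijective h ⟨hh.injective, hh.surjective⟩).symm.toLinearMap.comp B

@[simp]
theorem apply_representing (hh : IsNondegenerateHermitian h) (B : V →ₗ⋆[K] V →ₗ[K] K) (x y : V) :
    h (hh.representing B x) y = B x y :=
  congrArg (fun f : V →ₗ[K] K => f y)
    ((LinearEquiv.ofBijective h ⟨hh.injective, hh.surjective⟩).apply_symm_apply (B x))

/-- The adjoint of `f` with respect to `h`. -/
noncomputable def adjoint (hh : IsNondegenerateHermitian h) (f : Module.End K V) :
    Module.End K V :=
  hh.representing (h.compl₂ f)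

@[simp]
theorem adjoint_left (hh : IsNondegenerateHermitian h) (f : Module.End K V) (x y : V) :
    h (hh.adjoint f x) y = h x (f y) :=
  hh.apply_representing _ x y

@[simp]
theorem adjoint_right (hh : IsNondegenerateHermitian h) (f : Module.End K V) (x y : V) :
    h x (hh.adjoint f y) = h (f x) y := by
  rw [← hh.star_apply, hh.adjoint_left, hh.star_apply]

theorem adjoint_eq_self_iff (hh : IsNondegenerateHermitian h) {f : Module.End K V} :
    hh.adjoint f = f ↔ ∀ x y, h (f x) y = h x (f y) := by
  refine ⟨fun hf x y => by rw [← hh.adjoint_left, hf], fun hf => ?_⟩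
  exact LinearMap.ext fun x => hh.ext_left fun y => by rw [hh.adjoint_left, hf]

/-- The star ring structure on the endomorphisms of `V` given by the adjoint with respect to `h`.
It depends on `h`, so it is not an instance. -/
@[reducible]
noncomputable def endStarRing (hh : IsNondegenerateHermitian h) : StarRing (Module.End K V) where
  star := hh.adjoint
  star_involutive f := LinearMap.ext fun x => hh.ext_left fun y => by simp
  star_mul f g := LinearMap.ext fun x => hh.ext_left fun y => by simp
  star_add f g := LinearMap.ext fun x => hh.ext_left fun y => by simp

theorem endStarModule (hh : IsNondegenerateHermitian h) :
    letI := hh.endStarRing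
    StarModule K (Module.End K V) :=
  letI := hh.endStarRing
  ⟨fun c f => LinearMap.ext fun x => hh.ext_left fun y => by
    change h (hh.adjoint (c • f) x) y = h (star c • hh.adjoint f x) y
    simp [starRingEnd_apply]⟩

theorem isUnit_representing (hh : IsNondegenerateHermitian h) (hh' : IsNondegenerateHermitian h') :
    IsUnit (hh.representing h') := by
  rw [LinearMap.isUnit_iff_ker_eq_bot, LinearMap.ker_eq_bot]
  exact fun x y hxy => hh'.ext_left fun z => by
    rw [← hh.apply_representing h', hxy, hh.apply_representing]

theorem adjoint_representing (hh : IsNondegenerateHermitian h)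
    (hh' : IsNondegenerateHermitian h') :
    hh.adjoint (hh.representing h') = hh.representing h' :=
  hh.adjoint_eq_self_iff.mpr fun x y => by
    rw [hh.apply_representing, ← hh.star_apply, hh.apply_representing, hh'.star_apply]

theorem commute_representing (hh : IsNondegenerateHermitian h) {B : V →ₗ⋆[K] V →ₗ[K] K}
    {e : Module.End K V} (he : ∀ x y, h (e x) y = h x (e y))
    (he' : ∀ x y, B (e x) y = B x (e y)) : Commute e (hh.representing B) :=
  LinearMap.ext fun x => hh.ext_left fun y => by simp [he, he']

theorem exists_isometry_commute [Finite K] (hh : IsNondegenerateHermitian h)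
    (hh' : IsNondegenerateHermitian h') {c : K} (hc : star c ≠ c) {e : Module.End K V}
    (he : ∀ x y, h (e x) y = h x (e y)) (he' : ∀ x y, h' (e x) y = h' x (e y)) :
    ∃ b : V ≃ₗ[K] V, (∀ x y, h (b x) (b y) = h' x y) ∧ Commute e b.toLinearMap := by
  let := hh.endStarRing
  have := hh.endStarModule
  have : Finite (Module.End K V) := Module.finite_of_finite K
  obtain ⟨b, hb_mem, hb⟩ := exists_mem_adjoin_star_mul_self_eq hc
    (hh.isUnit_representing hh') (hh.adjoint_representing hh')
  have e_mem : e ∈ StarSubalgebra.centralizer K {hh.representing h'} := by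
    have comm := (hh.commute_representing he he').symm.eq
    rw [StarSubalgebra.mem_centralizer_iff]
    rintro _ rfl
    have star_eq : star (hh.representing h') = hh.representing h' := hh.adjoint_representing hh'
    exact ⟨comm, by rwa [star_eq]⟩
  have comm : Commute e b :=
    (StarSubalgebra.mem_centralizer_iff _).mp
      (StarAlgebra.adjoin_le_centralizer_centralizer K _ hb_mem) e e_mem |>.1
  have isometry (x y : V) : h (b x) (b y) = h' x y := by
    rw [← hh.apply_representing h', ← hb, ← hh.adjoint_left]
    rfl
  have b_injective : Function.Injective b := fun x y hxy => hh'.ext_left fun z => by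
    rw [← isometry, hxy, isometry]
  exact ⟨.ofInjectiveEndo b b_injective, isometry, comm⟩

end IsNondegenerateHermitian

/-- The endomorphism `e` is self-adjoint for some nondegenerate Hermitian form. Unlike
self-adjointness for a fixed form, this is invariant under conjugation and can be checked on the
summands of a direct sum decomposition. -/
def AdmitsHermitianForm {K V : Type*} [Field K] [StarRing K] [AddCommGroup V] [Module K V]
    (e : Module.End K V) : Prop :=
  ∃ h : V →ₗ⋆[K] V →ₗ[K] K, IsNondegenerateHermitian h ∧ ∀ x y, h (e x) y = h x (e y)

namespace AdmitsHermitianForm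

variable {K V W : Type*} [Field K] [StarRing K] [AddCommGroup V] [Module K V] [AddCommGroup W]
  [Module K W]

theorem of_surjective {B : W →ₗ⋆[K] W →ₗ[K] K} (hB : B.IsSymm) {T : Module.End K W}
    (hT : ∀ x y, B (T x) y = B x (T y)) {π : W →ₗ[K] V} (hπ : Function.Surjective π)
    (hker : ker π = ker B) {e : Module.End K V} (he : ∀ w, π (T w) = e (π w)) :
    AdmitsHermitianForm e := by
  obtain ⟨s, hs⟩ := exists_rightInverse_of_surjective π (range_eq_top.mpr hπ)
  replace hs (x : V) : π (s x) = x := congrArg (fun f => f x) hs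
  have B_congr_left {w w' : W} (hw : π w = π w') : B w = B w' := by
    rw [← sub_eq_zero, ← map_sub, ← mem_ker, ← hker, mem_ker, map_sub, hw, sub_self]
  have B_congr_right {w w' : W} (hw : π w = π w') (z : W) : B z w = B z w' := by
    rw [← hB.eq w z, ← hB.eq w' z, B_congr_left hw]
  refine ⟨(B.comp s).compl₂ s, ⟨⟨fun x y => hB.eq (s x) (s y)⟩, fun x hx => ?_⟩, fun x y => ?_⟩
  · have : s x ∈ ker B := mem_ker.mpr <| LinearMap.ext fun w => by
      rw [B_congr_right (hs (π w)).symm]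
      exact hx (π w)
    rwa [← hker, mem_ker, hs] at this
  · have hes (x : V) : π (s (e x)) = π (T (s x)) := by rw [hs, he, hs]
    simp only [compl₂_apply, comp_apply]
    rw [B_congr_left (hes x), hT, B_congr_right (hes y)]

theorem of_equiv {f : Module.End K W} (hf : AdmitsHermitianForm f) (φ : V ≃ₗ[K] W)
    {e : Module.End K V} (hφ : ∀ x, φ (e x) = f (φ x)) : AdmitsHermitianForm e := by
  obtain ⟨h, hh, hf⟩ := hf
  exact ⟨(h.comp φ.toLinearMap).compl₂ φ.toLinearMap, hh.comp_equiv φ, fun x y => by simp [hφ, hf]⟩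

theorem pi {ι : Type*} [Finite ι] {M : ι → Type*} [∀ i, AddCommGroup (M i)]
    [∀ i, Module K (M i)] {e : ∀ i, Module.End K (M i)} (he : ∀ i, AdmitsHermitianForm (e i)) :
    AdmitsHermitianForm (LinearMap.piMap e) := by
  classical
  have := Fintype.ofFinite ι
  choose h hh he using he
  have sum_apply (x y : ∀ i, M i) :
      (∑ i, ((h i).comp (proj i)).compl₂ (proj i)) x y = ∑ i, h i (x i) (y i) := by simp
  refine ⟨∑ i, ((h i).comp (proj i)).compl₂ (proj i), ⟨⟨fun x y => ?_⟩, fun x hx => ?_⟩,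
    fun x y => ?_⟩
  · simp [(hh _).isSymm.eq]
  · funext i
    refine (hh i).separatingLeft _ fun y => ?_
    have := hx (Pi.single i y)
    rw [sum_apply, Finset.sum_eq_single i (fun j _ hj => by simp [hj]) (by simp)] at this
    simpa using this
  · simp [he]

end AdmitsHermitianForm

open Polynomial

/-- The sesquilinear form on `R[X]` sending `(f, g)` to the coefficient of `X ^ (n - 1)` in
`star f * g`, which induces a Hermitian form on `R[X] ⧸ (X ^ n)`. The extra factor `X` in the
definition avoids the subtraction, so that the form is zero for `n = 0`. -/
noncomputable def coeffForm (R : Type*) [CommRing R] [StarRing R] (n : ℕ) :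
    R[X] →ₗ⋆[R] R[X] →ₗ[R] R :=
  LinearMap.mk₂'ₛₗ (starRingEnd R) (RingHom.id R)
    (fun f g => (f.map (starRingEnd R) * g * X).coeff n)
    (fun f f' g => by simp [add_mul])
    (fun a f g => by simp [smul_eq_C_mul, mul_assoc])
    (fun f g g' => by simp [mul_add, add_mul])
    (fun a f g => by simp)

section coeffForm

variable {R : Type*} [CommRing R] [StarRing R]

theorem coeffForm_apply (n : ℕ) (f g : R[X]) :
    coeffForm R n f g = (f.map (starRingEnd R) * g * X).coeff n :=
  rfl

theorem isSymm_coeffForm (n : ℕ) : (coeffForm R n).IsSymm where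
  eq f g := by
    have map_map_star : (f.map (starRingEnd R)).map (starRingEnd R) = f := by
      ext; simp
    simp only [coeffForm_apply, ← coeff_map, Polynomial.map_mul, map_X, map_map_star]
    rw [mul_comm f]

theorem coeffForm_X_mul (n : ℕ) (f g : R[X]) :
    coeffForm R n (X * f) g = coeffForm R n f (X * g) := by
  simp only [coeffForm_apply, Polynomial.map_mul, map_X]
  ring_nf

theorem mem_ker_coeffForm {n : ℕ} {f : R[X]} : f ∈ ker (coeffForm R n) ↔ X ^ n ∣ f := by
  rw [mem_ker]
  constructor
  · intro hf
    refine X_pow_dvd_iff.mpr fun i hi => ?_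
    have : coeffForm R n f (X ^ (n - 1 - i)) = 0 := by rw [hf, LinearMap.zero_apply]
    rw [coeffForm_apply, mul_assoc, ← pow_succ, show n - 1 - i + 1 = n - i by omega,
      coeff_mul_X_pow', if_pos (n.sub_le i), Nat.sub_sub_self hi.le, coeff_map] at this
    exact (map_eq_zero_iff _ (starRingAut (R := R)).injective).mp this
  · rintro ⟨g, rfl⟩
    refine LinearMap.ext fun g' => ?_
    rw [coeffForm_apply, Polynomial.map_mul, Polynomial.map_pow, map_X, mul_assoc, mul_assoc,
      ← mul_assoc _ g', coeff_X_pow_mul']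
    simp

end coeffForm

theorem admitsHermitianForm_X_smul_quotient {K : Type*} [Field K] [StarRing K] (n : ℕ) :
    AdmitsHermitianForm
      (Algebra.lsmul K K (K[X] ⧸ Submodule.span K[X] {(X : K[X]) ^ n}) (X : K[X])) := by
  let N : Submodule K[X] K[X] := Submodule.span K[X] {(X : K[X]) ^ n}
  refine .of_surjective (isSymm_coeffForm n) (T := Algebra.lsmul K K K[X] (X : K[X]))
    (π := N.mkQ.restrictScalars K) (coeffForm_X_mul n) N.mkQ_surjective ?_ fun f => rfl
  ext f
  rw [mem_ker_coeffForm, mem_ker, restrictScalars_apply, Submodule.mkQ_apply,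
    Submodule.Quotient.mk_eq_zero, Ideal.mem_span_singleton]

theorem AdmitsHermitianForm.of_isNilpotent {K V : Type*} [Field K] [StarRing K] [AddCommGroup V]
    [Module K V] [FiniteDimensional K V] {e : Module.End K V} (he : IsNilpotent e) :
    AdmitsHermitianForm e := by
  classical
  obtain ⟨N, hN⟩ := he
  have isTorsion : Module.IsTorsion' (Module.AEval' e) (Submonoid.powers (X : K[X])) := by
    rw [Submodule.isTorsion'_powers_iff]
    intro x
    obtain ⟨x, rfl⟩ := (Module.AEval'.of e).surjective x
    exact ⟨N, by rw [Module.AEval'.X_pow_smul_of, hN, zero_smul, map_zero]⟩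
  obtain ⟨d, k, ⟨Φ⟩⟩ := Module.torsion_by_prime_power_decomposition irreducible_X isTorsion
  let Ψ := Φ.trans (DirectSum.linearEquivFunOnFintype K[X] (Fin d) _)
  refine AdmitsHermitianForm.of_equiv
    (.pi fun i => admitsHermitianForm_X_smul_quotient (K := K) (k i))
    ((Module.AEval'.of e).trans (Ψ.restrictScalars K)) fun x => ?_
  change Ψ (Module.AEval'.of e (e x)) = (X : K[X]) • Ψ (Module.AEval'.of e x)
  rw [← map_smul, Module.AEval'.X_smul_of]

namespace IsNondegenerateHermitian

variable {K V : Type*} [Field K] [Finite K] [StarRing K] {c : K} [AddCommGroup V] [Module K V]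
  [FiniteDimensional K V] {h : V →ₗ⋆[K] V →ₗ[K] K}

theorem exists_isometry_conj_of_conj (hh : IsNondegenerateHermitian h) (hc : star c ≠ c)
    {e₁ e₂ : Module.End K V} (he₁ : ∀ x y, h (e₁ x) y = h x (e₁ y))
    (he₂ : ∀ x y, h (e₂ x) y = h x (e₂ y)) {φ : V ≃ₗ[K] V}
    (hφ : ∀ x, φ (e₁ (φ.symm x)) = e₂ x) :
    ∃ u : V ≃ₗ[K] V, (∀ x y, h (u x) (u y) = h x y) ∧ ∀ x, u (e₁ (u.symm x)) = e₂ x := by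
  have map_apply (x : V) : φ (e₁ x) = e₂ (φ x) := by rw [← hφ, φ.symm_apply_apply]
  obtain ⟨b, hb, hbe⟩ := hh.exists_isometry_commute (hh.comp_equiv φ) hc he₁
    fun x y => by simp [map_apply, he₂]
  have commute_apply (x : V) : e₁ (b x) = b (e₁ x) := congrArg (fun f => f x) hbe.eq
  refine ⟨b.symm.trans φ, fun x y => ?_, fun x => ?_⟩
  · simpa using (hb (b.symm x) (b.symm y)).symm
  · simp [commute_apply, hφ]

theorem exists_conj_selfAdjoint_of_isNilpotent (hh : IsNondegenerateHermitian h)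
    (hc : star c ≠ c) {e : Module.End K V} (he : IsNilpotent e) :
    ∃ (e₀ : Module.End K V) (φ : V ≃ₗ[K] V), IsNilpotent e₀ ∧
      (∀ x y, h (e₀ x) y = h x (e₀ y)) ∧ ∀ x, φ (e (φ.symm x)) = e₀ x := by
  obtain ⟨h', hh', he'⟩ := AdmitsHermitianForm.of_isNilpotent he
  obtain ⟨b, hb, -⟩ := hh.exists_isometry_commute hh' hc (e := 0) (by simp) (by simp)
  refine ⟨b.conj e, b, he.map b.conjRingEquiv, fun x y => ?_, fun x => rfl⟩
  have := he' (b.symm x) (b.symm y)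
  rwa [← hb, ← hb, b.apply_symm_apply, b.apply_symm_apply] at this

end IsNondegenerateHermitian

end HermitianForms

theorem unitary_nilpotent_orbits_general {K V : Type*} [Field K] [Finite K] [StarRing K] {c : K}
    (hc : star c ≠ c) [AddCommGroup V] [Module K V] [FiniteDimensional K V]
    {h : V →ₗ⋆[K] V →ₗ[K] K} (hh : IsNondegenerateHermitian h) :
    (∀ e₁ e₂ : Module.End K V,
        (∀ x y : V, h (e₁ x) y = h x (e₁ y)) → (∀ x y : V, h (e₂ x) y = h x (e₂ y)) →
        ((∃ u : V ≃ₗ[K] V, (∀ x y : V, h (u x) (u y) = h x y) ∧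
            ∀ x : V, u (e₁ (u.symm x)) = e₂ x) ↔
          (∃ φ : V ≃ₗ[K] V, ∀ x : V, φ (e₁ (φ.symm x)) = e₂ x)))
    ∧ (∀ e₁ : Module.End K V, IsNilpotent e₁ →
        ∃ (e₀ : Module.End K V) (φ : V ≃ₗ[K] V),
          IsNilpotent e₀ ∧ (∀ x y : V, h (e₀ x) y = h x (e₀ y)) ∧
          ∀ x : V, φ (e₁ (φ.symm x)) = e₀ x) :=
  ⟨fun _ _ he₁ he₂ => ⟨fun ⟨u, _, hu⟩ => ⟨u, hu⟩,
      fun ⟨_, hφ⟩ => hh.exists_isometry_conj_of_conj hc he₁ he₂ hφ⟩,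
    fun _ he₁ => hh.exists_conj_selfAdjoint_of_isNilpotent hc he₁⟩

section FrobeniusInvolution

open Polynomial

theorem exists_pow_ne_self {K : Type*} [Field K] [Fintype K] {q : ℕ} (hq : 1 < q)
    (hqK : q < Fintype.card K) : ∃ c : K, c ^ q ≠ c := by
  by_contra! hpow
  refine FiniteField.X_pow_card_sub_X_ne_zero K hq
    (eq_zero_of_natDegree_lt_card_of_eval_eq_zero _ Function.injective_id (fun c : K => ?_) ?_)
  · simp [hpow]
  · rwa [FiniteField.X_pow_card_sub_X_natDegree_eq K hq]

/-- The involution `c ↦ c ^ p ^ n` of a ring of characteristic `p` on which the `n`-th iterate of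
Frobenius squares to the identity. It depends on `n`, so it is not an instance. -/
@[reducible]
def frobeniusStarRing {R : Type*} [CommRing R] (p n : ℕ) [ExpChar R p]
    (hinv : ∀ c : R, (c ^ p ^ n) ^ p ^ n = c) : StarRing R where
  star c := c ^ p ^ n
  star_involutive := hinv
  star_mul c d := by rw [mul_comm, mul_pow]
  star_add c d := add_pow_expChar_pow c d p n

end FrobeniusInvolution

/-- **Nilpotent orbits of the finite unitary group.**
Let `q` be an odd prime power, `K = 𝔽_{q²}` with involution `σ(c) = c^q`, and `(V, h)` a
finite-dimensional nondegenerate Hermitian space over `K`.  Then: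
(i) two nilpotent `h`-self-adjoint endomorphisms of `V` are conjugate under the unitary group
`U(V, h)` if and only if they are conjugate under `GL(V)`; and
(ii) every nilpotent endomorphism of `V` is `GL(V)`-conjugate to an `h`-self-adjoint nilpotent
endomorphism.  (Consequently, unitary orbits of self-adjoint nilpotents are classified by the
partitions of `dim V` via Jordan type.) -/
theorem unitary_nilpotent_orbits
    (p e : ℕ) (hp : p.Prime) (q : ℕ) (hq : q = p ^ (e + 1)) (hodd : Odd q)
    (K : Type*) [Field K] [Fintype K] (hK : Fintype.card K = q ^ 2)
    (V : Type*) [AddCommGroup V] [Module K V] [FiniteDimensional K V]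
    (h : V → V → K)
    (haddl : ∀ x y z : V, h (x + y) z = h x z + h y z)
    (haddr : ∀ x y z : V, h x (y + z) = h x y + h x z)
    (hsmull : ∀ (c : K) (x y : V), h (c • x) y = c ^ q * h x y)
    (hsmulr : ∀ (c : K) (x y : V), h x (c • y) = c * h x y)
    (hconj : ∀ x y : V, h y x = (h x y) ^ q)
    (hnd : ∀ x : V, (∀ y : V, h x y = 0) → x = 0) :
    (∀ e₁ e₂ : Module.End K V, IsNilpotent e₁ → IsNilpotent e₂ →
        (∀ x y : V, h (e₁ x) y = h x (e₁ y)) → (∀ x y : V, h (e₂ x) y = h x (e₂ y)) →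
        ((∃ u : V ≃ₗ[K] V, (∀ x y : V, h (u x) (u y) = h x y) ∧
            ∀ x : V, u (e₁ (u.symm x)) = e₂ x) ↔
          (∃ φ : V ≃ₗ[K] V, ∀ x : V, φ (e₁ (φ.symm x)) = e₂ x)))
    ∧ (∀ e₁ : Module.End K V, IsNilpotent e₁ →
        ∃ (e₀ : Module.End K V) (φ : V ≃ₗ[K] V),
          IsNilpotent e₀ ∧ (∀ x y : V, h (e₀ x) y = h x (e₀ y)) ∧
          ∀ x : V, φ (e₁ (φ.symm x)) = e₀ x) := by
  subst hq
  have := Fact.mk hp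
  have : CharP K p := charP_of_card_eq_prime_pow (hK.trans (pow_mul p (e + 1) 2).symm)
  have hq : 1 < p ^ (e + 1) := Nat.one_lt_pow e.succ_ne_zero hp.one_lt
  obtain ⟨c, hc⟩ := exists_pow_ne_self (K := K) hq (hK ▸ lt_self_pow₀ hq one_lt_two)
  let := frobeniusStarRing p (e + 1) fun c : K => by
    rw [← pow_mul, ← sq, ← hK, FiniteField.pow_card]
  let H : V →ₗ⋆[K] V →ₗ[K] K :=
    LinearMap.mk₂'ₛₗ (starRingEnd K) (RingHom.id K) h haddl hsmull haddr hsmulr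
  have hH : IsNondegenerateHermitian H := ⟨⟨fun x y => (hconj x y).symm⟩, hnd⟩
  have ⟨conj_iff, exists_conj⟩ := unitary_nilpotent_orbits_general hc hH
  exact ⟨fun e₁ e₂ _ _ => conj_iff e₁ e₂, exists_conj⟩
end
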